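/- arXiv:1904.05051 — 2 statements merged into one kernel-verified Lean document; each statement's English description precedes it below -/
import Mathlib

section
/- Assume the abc-conjecture. Let F(U,V) ∈ ℤ[U,V] be a nonzero homogeneous polynomial of degree d without any repeated irreducible factors. Then for every ε > 0 there exists a constant c > 0, depending only on F and ε, such that for all coprime integers u, v with F(u,v) ≠ 0, one has rad(F(u,v)) ≥ c · max(|u|,|v|)^{d−2−ε}. -/
/-!
The estimate is reduced to the abc-conjecture by a Belyi map, and the map is built up one polynomial
step at a time.

For `f` over `ℚ`, `RadBound f` bounds from below, by the height of `x` to the power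
`deg f - 1 - ε`, the product of the primes at which a rational `x` meets `∞` or a root of `f`. For
`f = X (X - 1)` this is the abc-conjecture (`radBound_abc`). It is inherited by divisors, because a
cofactor `q` contributes at most its size, which is `O(height ^ deg q)` (`RadBound.of_dvd`). It also
pulls back along a polynomial `φ` of degree `n` all of whose critical values are roots of a
squarefree `g`: the derivative of `φ` divides `g ∘ φ`, the quotient `h` has the same roots, and
`deg h - 1 = n (deg g - 1)`, which matches `height (φ x) ≍ height x ^ n` exactly
(`RadBound.of_comp`, `RadBoundDivisors.of_comp`). This is the Riemann-Hurwitz formula for `φ`.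

Every nonzero `f` is reached in this way. While `f` has an irreducible factor `p` of degree at least
two, taking `φ = p` replaces the roots of `p` by `0` and by critical values of degree less than
`deg p`, so a suitable weight decreases (`radBoundDivisors_of_ne_zero`). When all roots are rational,
`φ = (X - s₁) ^ a (X - s₃) ^ b`, with remaining critical point at a third root `s₂`, decreases their
number until only two are left (`radBoundDivisors_prod`).

A squarefree form `F(U, V)` of degree `d` dehomogenizes to a squarefree `f` of degree `d` or `d - 1`.
If `deg f = d - 1`, then `V` divides `F` and the bound for `f` at `u / v` is the claim; if
`deg f = d`, the primes dividing `v` cost one extra factor of the height.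
-/

/-- The radical of a natural number: the product of its distinct prime factors. -/
def radNat (m : ℕ) : ℕ := ∏ p ∈ m.primeFactors, p

/-- The abc-conjecture. -/
def ABCConjecture : Prop :=
  ∀ ε : ℝ, 0 < ε → ∃ K : ℝ, 0 < K ∧
    ∀ a b c : ℕ, 0 < a → 0 < b → 0 < c → Nat.Coprime a b → a + b = c →
      (c : ℝ) ≤ K * (radNat (a * b * c) : ℝ) ^ ((1 : ℝ) + ε)

open Polynomial

/-! ### Radicals and heights -/

lemma radNat_pos (m : ℕ) : 0 < radNat m :=
  Finset.prod_pos fun _ hp => (Nat.prime_of_mem_primeFactors hp).pos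

lemma radNat_le_mul {m C n : ℕ} (hC : C ≠ 0) (hn : n ≠ 0)
    (h : ∀ p, p.Prime → p ∣ m → p ∣ C ∨ p ∣ n) : radNat m ≤ C * radNat n := by
  have hsub : m.primeFactors ⊆ C.primeFactors ∪ n.primeFactors := by
    intro p hp
    have hpp := Nat.prime_of_mem_primeFactors hp
    rcases h p hpp (Nat.dvd_of_mem_primeFactors hp) with h | h
    · exact Finset.mem_union_left _ (Nat.mem_primeFactors.2 ⟨hpp, h, hC⟩)
    · exact Finset.mem_union_right _ (Nat.mem_primeFactors.2 ⟨hpp, h, hn⟩)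
  have h1 : radNat m ∣ C * radNat n := by
    have h2 : radNat m ∣ ∏ p ∈ C.primeFactors ∪ n.primeFactors, p :=
      Finset.prod_dvd_prod_of_subset _ _ _ hsub
    have h3 : ∏ p ∈ C.primeFactors ∪ n.primeFactors, p ∣
        (∏ p ∈ C.primeFactors, p) * ∏ p ∈ n.primeFactors, p :=
      ⟨∏ p ∈ C.primeFactors ∩ n.primeFactors, p, (Finset.prod_union_inter).symm⟩
    exact h2.trans (h3.trans (mul_dvd_mul (Nat.prod_primeFactors_dvd C) dvd_rfl))
  exact Nat.le_of_dvd (Nat.mul_pos (Nat.pos_of_ne_zero hC) (radNat_pos n)) h1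

/-- The (multiplicative, naive) height of a rational number. -/
def ht (x : ℚ) : ℕ := max x.num.natAbs x.den

/-- The product of the primes at which `x` meets `∞` or a root of `f`, that is, the primes dividing
the denominator of `x` or the numerator of `f(x)`. -/
noncomputable def supportRad (f : ℚ[X]) (x : ℚ) : ℕ := radNat (x.den * (f.eval x).num.natAbs)

/-- The affine form of the radical estimate for the binary form `V * F(U, V)`, where `F` is the
homogenization of `f`: including the point at infinity accounts for the exponent
`deg f - 1 = (deg f + 1) - 2`. -/
def RadBound (f : ℚ[X]) : Prop :=
  ∀ ε : ℝ, 0 < ε → ∃ c : ℝ, 0 < c ∧ ∀ x : ℚ, f.eval x ≠ 0 →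
    c * (ht x : ℝ) ^ ((f.natDegree : ℝ) - 1 - ε) ≤ supportRad f x

lemma one_le_ht (x : ℚ) : 1 ≤ ht x := le_max_of_le_right x.pos

lemma one_le_ht_real (x : ℚ) : (1 : ℝ) ≤ ht x := by exact_mod_cast one_le_ht x

lemma abs_num_le_ht (x : ℚ) : |(x.num : ℝ)| ≤ ht x := by
  rw [← Int.cast_abs, Int.abs_eq_natAbs]
  exact_mod_cast le_max_left _ _

lemma den_le_ht (x : ℚ) : (x.den : ℝ) ≤ ht x := by
  exact_mod_cast le_max_right _ _

lemma isCoprime_num_den (x : ℚ) : IsCoprime x.num (x.den : ℤ) := by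
  rw [Int.isCoprime_iff_gcd_eq_one, Int.gcd_eq_natAbs, Int.natAbs_natCast]
  exact x.reduced

/-- Clearing denominators in `q(x)`, with control of the size of the resulting integer. -/
lemma exists_clear_denom (n : ℕ) (q : ℚ[X]) (hq : q.natDegree ≤ n) :
    ∃ C : ℕ, 0 < C ∧ ∃ K : ℝ, 0 < K ∧ ∀ x : ℚ, ∃ m : ℤ,
      q.eval x * C * (x.den : ℚ) ^ n = m ∧ |(m : ℝ)| ≤ K * (ht x : ℝ) ^ n := by
  refine induction_with_natDegree_le (fun q => ∃ C : ℕ, 0 < C ∧ ∃ K : ℝ, 0 < K ∧ ∀ x : ℚ, ∃ m : ℤ,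
      q.eval x * C * (x.den : ℚ) ^ n = m ∧ |(m : ℝ)| ≤ K * (ht x : ℝ) ^ n) n ?_ ?_ ?_ q hq
  · exact ⟨1, one_pos, 1, one_pos, fun x => ⟨0, by simp, by simp⟩⟩
  · intro i r _ hi
    refine ⟨r.den, r.pos, |(r.num : ℝ)| + 1, by positivity, fun x =>
      ⟨r.num * x.num ^ i * (x.den : ℤ) ^ (n - i), ?_, ?_⟩⟩
    · have hx : x * x.den = x.num := Rat.mul_den_eq_num x
      have hr : r * r.den = r.num := Rat.mul_den_eq_num r
      push_cast
      rw [← hx, ← hr, eval_mul, eval_C, eval_pow, eval_X, mul_pow]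
      have : (x.den : ℚ) ^ n = (x.den : ℚ) ^ i * (x.den : ℚ) ^ (n - i) := by
        rw [← pow_add]; congr 1; omega
      rw [this]; ring
    · push_cast
      rw [abs_mul, abs_mul, abs_pow, abs_pow, Nat.abs_cast]
      have h1 := pow_le_pow_left₀ (abs_nonneg _) (abs_num_le_ht x) i
      have h2 := pow_le_pow_left₀ (Nat.cast_nonneg _) (den_le_ht x) (n - i)
      have : (ht x : ℝ) ^ n = (ht x : ℝ) ^ i * (ht x : ℝ) ^ (n - i) := by
        rw [← pow_add]; congr 1; omega
      rw [this, ← mul_assoc]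
      gcongr
      linarith
  · rintro f g _ _ ⟨C₁, hC₁, K₁, hK₁, h₁⟩ ⟨C₂, hC₂, K₂, hK₂, h₂⟩
    refine ⟨C₁ * C₂, by positivity, C₂ * K₁ + C₁ * K₂, by positivity, fun x => ?_⟩
    obtain ⟨m₁, e₁, b₁⟩ := h₁ x
    obtain ⟨m₂, e₂, b₂⟩ := h₂ x
    refine ⟨C₂ * m₁ + C₁ * m₂, ?_, ?_⟩
    · push_cast
      rw [← e₁, ← e₂, eval_add]; ring
    · push_cast
      refine (abs_add_le _ _).trans ?_
      rw [abs_mul, abs_mul, Nat.abs_cast, Nat.abs_cast, add_mul, mul_assoc, mul_assoc]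
      gcongr

lemma exists_den_dvd (q : ℚ[X]) : ∃ C : ℕ, 0 < C ∧ ∀ x : ℚ,
    (q.eval x).den ∣ C * x.den ^ q.natDegree := by
  obtain ⟨C, hC, K, -, h⟩ := exists_clear_denom _ q le_rfl
  refine ⟨C, hC, fun x => ?_⟩
  obtain ⟨m, hm, -⟩ := h x
  have hd : ((C * x.den ^ q.natDegree : ℕ) : ℚ) ≠ 0 := by
    have := x.pos
    positivity
  have : q.eval x = Rat.divInt m (C * x.den ^ q.natDegree : ℕ) := by
    rw [Rat.divInt_eq_div, ← hm]
    field_simp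
    push_cast
    ring
  have h2 := Rat.den_dvd m (C * x.den ^ q.natDegree : ℕ)
  rw [← this] at h2
  exact_mod_cast h2

lemma exists_num_le (q : ℚ[X]) : ∃ K : ℝ, 0 < K ∧ ∀ x : ℚ,
    ((q.eval x).num.natAbs : ℝ) ≤ K * (ht x : ℝ) ^ q.natDegree := by
  obtain ⟨C, hC, K, hK, h⟩ := exists_clear_denom _ q le_rfl
  refine ⟨K, hK, fun x => ?_⟩
  obtain ⟨m, hm, hb⟩ := h x
  refine le_trans ?_ hb
  rw [← Int.cast_abs, Int.abs_eq_natAbs, Int.cast_natCast, Nat.cast_le]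
  have h1 : (q.eval x).num * (C * x.den ^ q.natDegree) = m * (q.eval x).den := by
    have := Rat.mul_den_eq_num (q.eval x)
    have h2 : ((q.eval x).num : ℚ) * (C * x.den ^ q.natDegree) = m * (q.eval x).den := by
      rw [← this, ← hm]; ring
    exact_mod_cast h2
  have hdvd : (q.eval x).num.natAbs ∣ m.natAbs := by
    have h3 : (q.eval x).num.natAbs ∣ m.natAbs * (q.eval x).den := by
      rw [← Int.natAbs_natCast (q.eval x).den, ← Int.natAbs_mul, ← h1, Int.natAbs_dvd_natAbs]
      exact dvd_mul_right _ _
    exact (q.eval x).reduced.dvd_of_dvd_mul_right h3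
  rcases Nat.eq_zero_or_pos m.natAbs with h0 | h0
  · have hm0 : m = 0 := Int.natAbs_eq_zero.1 h0
    have : (q.eval x).num = 0 := by
      rw [hm0, zero_mul] at h1
      have := x.pos
      rcases mul_eq_zero.1 h1 with h | h
      · exact h
      · exact absurd h (by positivity)
    simp [this]
  · exact Nat.le_of_dvd h0 hdvd

/-- A polynomial of degree `n` raises heights to the power `n`, up to a constant. The proof uses the
division `X ^ (2 n - 1) = φ A + B`, which bounds both the common factor of numerator and denominator
of `φ(x)` and the size of `x` in terms of `φ(x)`. -/
lemma exists_ht_pow_le (φ : ℚ[X]) (hφ : 0 < φ.natDegree) : ∃ K : ℝ, 0 < K ∧ ∀ x : ℚ,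
    (ht x : ℝ) ^ φ.natDegree ≤ K * ht (φ.eval x) := by
  set n := φ.natDegree with hn
  have hφ0 : φ ≠ 0 := by rintro rfl; simp at hn; omega
  obtain ⟨A, B, hAB, hA, hB⟩ : ∃ A B : ℚ[X], (X : ℚ[X]) ^ (2 * n - 1) = φ * A + B ∧
      A.natDegree ≤ n - 1 ∧ B.natDegree ≤ n - 1 := by
    refine ⟨X ^ (2 * n - 1) / φ, X ^ (2 * n - 1) % φ, (EuclideanDomain.div_add_mod _ _).symm, ?_, ?_⟩
    · have h1 := degree_add_div (q := φ) (p := (X : ℚ[X]) ^ (2 * n - 1)) hφ0 (by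
        rw [degree_X_pow, degree_eq_natDegree hφ0, ← hn]; exact_mod_cast (by omega))
      have hq0 : (X : ℚ[X]) ^ (2 * n - 1) / φ ≠ 0 := by
        intro h0
        rw [h0, degree_zero, degree_X_pow] at h1
        simp at h1
      rw [degree_X_pow, degree_eq_natDegree hφ0, degree_eq_natDegree hq0] at h1
      have h2 : φ.natDegree + ((X : ℚ[X]) ^ (2 * n - 1) / φ).natDegree = 2 * n - 1 := by
        exact_mod_cast h1
      omega
    · have := natDegree_mod_lt ((X : ℚ[X]) ^ (2 * n - 1)) (q := φ) (by omega)
      omega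
  obtain ⟨C, hC, K, hK, h⟩ := exists_clear_denom n φ le_rfl
  obtain ⟨CA, hCA, KA, hKA, hA'⟩ := exists_clear_denom (n - 1) A hA
  obtain ⟨CB, hCB, KB, hKB, hB'⟩ := exists_clear_denom (n - 1) B hB
  refine ⟨(CB * KA + CA * KB + 1) * (C * CA * CB), by positivity, fun x => ?_⟩
  obtain ⟨m, hm, -⟩ := h x
  obtain ⟨mA, hmA, bA⟩ := hA' x
  obtain ⟨mB, hmB, bB⟩ := hB' x
  set y := φ.eval x with hy
  have hv := x.pos
  -- the integral form of the division identity at `x = u / v`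
  have key : (C * CA * CB : ℤ) * x.num ^ (2 * n - 1) =
      m * (mA * CB) + (C * x.den ^ n) * (mB * CA) := by
    have h1 : x ^ (2 * n - 1) = y * A.eval x + B.eval x := by
      simpa using congrArg (Polynomial.eval x) hAB
    have hx : x * x.den = x.num := Rat.mul_den_eq_num x
    have hpow : (x.den : ℚ) ^ (2 * n - 1) = (x.den : ℚ) ^ n * (x.den : ℚ) ^ (n - 1) := by
      rw [← pow_add]; congr 1; omega
    have : (C * CA * CB : ℚ) * x.num ^ (2 * n - 1) =
      m * (mA * CB) + (C * x.den ^ n) * (mB * CA) := by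
      rw [← hx, mul_pow, h1, hpow, ← hm, ← hmA, ← hmB]; ring
    exact_mod_cast this
  obtain ⟨k, hk⟩ : (y.den : ℤ) ∣ C * x.den ^ n := by
    have h1 : y.num * (C * x.den ^ n : ℤ) = m * y.den := by
      have h2 : (y.num : ℚ) * (C * x.den ^ n) = m * y.den := by
        rw [← Rat.mul_den_eq_num y, ← hm]; ring
      exact_mod_cast h2
    have h3 : (y.den : ℤ) ∣ y.num * (C * x.den ^ n) := h1 ▸ dvd_mul_left _ _
    exact (isCoprime_num_den y).symm.dvd_of_dvd_mul_left h3
  have hmk : m = y.num * k := by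
    have hd : (y.den : ℚ) ≠ 0 := by have := y.pos; positivity
    have hk' : (C * x.den ^ n : ℚ) = y.den * k := by exact_mod_cast hk
    have : (m : ℚ) = y.num * k := by
      rw [← hm, mul_assoc, hk', ← mul_assoc, Rat.mul_den_eq_num]
    exact_mod_cast this
  have hkpos : 0 < k := by
    have h1 : (0 : ℤ) < y.den * k := by rw [← hk]; positivity
    exact pos_of_mul_pos_right h1 (by positivity)
  have hkle : k ≤ C * CA * CB := by
    refine Int.le_of_dvd (by positivity) ?_
    have h1 : k ∣ (C * CA * CB : ℤ) * x.num ^ (2 * n - 1) := by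
      rw [key, hmk, hk]
      exact dvd_add (by exact ⟨y.num * (mA * CB), by ring⟩) (by exact ⟨y.den * (mB * CA), by ring⟩)
    have h2 : k ∣ (C * CA * CB : ℤ) * x.den ^ n := by
      have : k ∣ (C * x.den ^ n : ℤ) := ⟨y.den, by rw [hk]; ring⟩
      exact this.trans ⟨CA * CB, by ring⟩
    have hcop : IsCoprime (x.num ^ (2 * n - 1)) ((x.den : ℤ) ^ n) :=
      (isCoprime_num_den x).pow
    obtain ⟨s, t, hst⟩ := hcop
    have : (C * CA * CB : ℤ) = s * ((C * CA * CB : ℤ) * x.num ^ (2 * n - 1)) +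
        t * ((C * CA * CB : ℤ) * x.den ^ n) := by
      linear_combination (-(C * CA * CB : ℤ)) * hst
    rw [this]
    exact dvd_add (h1.mul_left _) (h2.mul_left _)
  set H : ℝ := (ht x : ℝ) with hH
  have hH1 : 1 ≤ H := one_le_ht_real x
  set Y : ℝ := (ht y : ℝ) with hY
  have hk0 : (0 : ℝ) < k := by exact_mod_cast hkpos
  have hm_le : |(m : ℝ)| ≤ k * Y := by
    rw [hmk]; push_cast
    rw [abs_mul, abs_of_pos hk0, mul_comm]
    gcongr
    exact abs_num_le_ht y
  have hv_le : (C : ℝ) * x.den ^ n ≤ k * Y := by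
    have : (C * x.den ^ n : ℝ) = y.den * k := by exact_mod_cast hk
    rw [this, mul_comm]
    gcongr
    exact den_le_ht y
  have hpowH : H ^ (2 * n - 1) = H ^ n * H ^ (n - 1) := by
    rw [← pow_add]; congr 1; omega
  have hY0 : 0 ≤ Y := Nat.cast_nonneg _
  have hC1 : (1 : ℝ) ≤ C := by exact_mod_cast hC
  have hCA1 : (1 : ℝ) ≤ CA := by exact_mod_cast hCA
  have hCB1 : (1 : ℝ) ≤ CB := by exact_mod_cast hCB
  have hmain : H ^ (2 * n - 1) ≤ (CB * KA + CA * KB + 1) * (k * Y) * H ^ (n - 1) := by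
    have hcases : H = |(x.num : ℝ)| ∨ H = x.den := by
      rw [hH, ht, Nat.cast_max, Nat.cast_natAbs, Int.cast_abs]
      exact max_choice _ _
    rcases hcases with hc | hc
    · have h1 : (C * CA * CB : ℝ) * |(x.num : ℝ)| ^ (2 * n - 1) ≤
          (k * Y) * ((KA * H ^ (n - 1)) * CB) + (k * Y) * ((KB * H ^ (n - 1)) * CA) := by
        have h2 : (C * CA * CB : ℝ) * x.num ^ (2 * n - 1) =
            m * (mA * CB) + (C * x.den ^ n) * (mB * CA) := by exact_mod_cast key
        have h3 : (C * CA * CB : ℝ) * |(x.num : ℝ)| ^ (2 * n - 1) =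
            |(C * CA * CB : ℝ) * x.num ^ (2 * n - 1)| := by
          rw [abs_mul, abs_pow, abs_of_pos (by positivity : (0 : ℝ) < C * CA * CB)]
        rw [h3, h2]
        refine (abs_add_le _ _).trans ?_
        rw [abs_mul, abs_mul, abs_mul, abs_mul (mB : ℝ), Nat.abs_cast, Nat.abs_cast,
          abs_of_nonneg (by positivity : (0 : ℝ) ≤ C * x.den ^ n)]
        gcongr
      have h4 : H ^ (2 * n - 1) ≤ (C * CA * CB : ℝ) * |(x.num : ℝ)| ^ (2 * n - 1) := by
        rw [← hc]
        refine le_mul_of_one_le_left (by positivity) ?_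
        nlinarith [mul_le_mul hC1 hCA1 zero_le_one (by positivity)]
      have h5 : 0 ≤ k * Y * H ^ (n - 1) := by positivity
      nlinarith
    · have h1 : H ^ n ≤ k * Y := by
        refine le_trans ?_ hv_le
        rw [hc]
        exact le_mul_of_one_le_left (by positivity) hC1
      rw [hpowH]
      gcongr
      refine h1.trans ?_
      exact le_mul_of_one_le_left (by positivity) (by
        have : (0 : ℝ) ≤ CB * KA + CA * KB := by positivity
        linarith)
  rw [hpowH] at hmain
  have hfin := le_of_mul_le_mul_right hmain (by positivity)
  refine hfin.trans ?_
  rw [mul_assoc]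
  gcongr
  exact_mod_cast hkle

/-! ### Transport of the estimate and the three point case -/

lemma RadBound.of_natDegree_le_one {f : ℚ[X]} (hf : f.natDegree ≤ 1) : RadBound f := by
  intro ε hε
  refine ⟨1, one_pos, fun x _ => ?_⟩
  have h1 : (f.natDegree : ℝ) ≤ 1 := by exact_mod_cast hf
  have h2 : (1 : ℝ) ≤ supportRad f x := by exact_mod_cast radNat_pos _
  rw [one_mul]
  exact (Real.rpow_le_one_of_one_le_of_nonpos (one_le_ht_real x) (by linarith)).trans h2

/-- Finitely many exceptional points do not affect a bound up to constants. -/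
lemma exists_const_of_finite {S : Set ℚ} (hS : S.Finite) (e : ℝ) :
    ∃ c : ℝ, 0 < c ∧ ∀ x ∈ S, c * (ht x : ℝ) ^ e ≤ 1 := by
  obtain ⟨B, hB⟩ := (hS.image fun x => (ht x : ℝ) ^ e).bddAbove
  refine ⟨(max B 1)⁻¹, by positivity, fun x hx => ?_⟩
  have h1 : (ht x : ℝ) ^ e ≤ max B 1 := (hB ⟨x, hx, rfl⟩).trans (le_max_left _ _)
  rw [inv_mul_le_iff₀ (by positivity)]
  linarith

/-- Passing to a divisor `f` of `h` costs at most the size of the cofactor. -/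
lemma RadBound.of_dvd {f h : ℚ[X]} (hh : h ≠ 0) (hfh : f ∣ h) (H : RadBound h) : RadBound f := by
  obtain ⟨q, rfl⟩ := hfh
  have hf0 : f ≠ 0 := left_ne_zero_of_mul hh
  have hq0 : q ≠ 0 := right_ne_zero_of_mul hh
  intro ε hε
  obtain ⟨c₁, hc₁, h₁⟩ := H ε hε
  obtain ⟨K, hK, hq⟩ := exists_num_le q
  obtain ⟨c₂, hc₂, h₂⟩ := exists_const_of_finite (S := {x | (f * q).IsRoot x})
    (finite_setOfPred_isRoot hh) ((f.natDegree : ℝ) - 1 - ε)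
  refine ⟨min (c₁ / K) c₂, by positivity, fun x hx => ?_⟩
  have hHpos : (0 : ℝ) < ht x := zero_lt_one.trans_le (one_le_ht_real x)
  by_cases h0 : (f * q).eval x = 0
  · have h3 : (1 : ℝ) ≤ supportRad f x := by exact_mod_cast radNat_pos _
    refine le_trans ?_ ((h₂ x h0).trans h3)
    gcongr
    exact min_le_right _ _
  · have h3 := h₁ x h0
    rw [natDegree_mul hf0 hq0] at h3
    have hqx : q.eval x ≠ 0 := by
      intro h; rw [eval_mul, h, mul_zero] at h0; exact h0 rfl
    have h4 : supportRad (f * q) x ≤ (q.eval x).num.natAbs * supportRad f x := by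
      refine radNat_le_mul (by simpa using hqx)
        (mul_ne_zero x.den_nz (by simpa using hx)) fun p hp hd => ?_
      rcases hp.dvd_mul.1 hd with hd | hd
      · exact Or.inr (hd.mul_right _)
      · rw [eval_mul] at hd
        have h5 : (f.eval x * q.eval x).num ∣ (f.eval x).num * (q.eval x).num := by
          rw [Rat.mul_num]
          exact Int.ediv_dvd_of_dvd (by
            rw [Int.natCast_dvd]; exact Nat.gcd_dvd_left _ _)
        have h6 := hd.trans (Int.natAbs_dvd_natAbs.2 h5)
        rw [Int.natAbs_mul] at h6
        rcases hp.dvd_mul.1 h6 with h | h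
        · exact Or.inr (h.mul_left _)
        · exact Or.inl h
    have h5 : (supportRad (f * q) x : ℝ) ≤ K * (ht x : ℝ) ^ q.natDegree * supportRad f x := by
      have h4' : (supportRad (f * q) x : ℝ) ≤ (q.eval x).num.natAbs * supportRad f x := by
        exact_mod_cast h4
      refine h4'.trans ?_
      gcongr
      exact hq x
    have h6 : c₁ * (ht x : ℝ) ^ ((f.natDegree : ℝ) - 1 - ε) * (ht x : ℝ) ^ q.natDegree ≤
        K * supportRad f x * (ht x : ℝ) ^ q.natDegree := by
      rw [mul_assoc, ← Real.rpow_natCast, ← Real.rpow_add hHpos, Real.rpow_natCast]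
      calc _ = c₁ * (ht x : ℝ) ^ (((f.natDegree + q.natDegree : ℕ) : ℝ) - 1 - ε) := by
            congr 2; push_cast; ring
        _ ≤ _ := h3.trans h5
        _ = _ := by ring
    have h7 := le_of_mul_le_mul_right h6 (by positivity)
    calc _ ≤ c₁ / K * (ht x : ℝ) ^ ((f.natDegree : ℝ) - 1 - ε) := by
          gcongr
          exact min_le_left _ _
      _ = c₁ * (ht x : ℝ) ^ ((f.natDegree : ℝ) - 1 - ε) / K := by ring
      _ ≤ _ := by rw [div_le_iff₀ hK]; linarith

lemma exists_supportRad_comp_le {g φ h : ℚ[X]} {k : ℕ} (hdvd : g.comp φ ∣ h ^ k) :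
    ∃ C : ℕ, 0 < C ∧ ∀ x : ℚ, h.eval x ≠ 0 →
      supportRad g (φ.eval x) ≤ C * supportRad h x := by
  obtain ⟨q, hq⟩ := hdvd
  obtain ⟨C₁, hC₁, h₁⟩ := exists_den_dvd φ
  obtain ⟨C₂, hC₂, h₂⟩ := exists_den_dvd q
  refine ⟨C₁ * C₂, by positivity, fun x hx => ?_⟩
  refine radNat_le_mul (by positivity) (mul_ne_zero x.den_nz (by simpa using hx)) fun p hp hd => ?_
  have den_case : ∀ {y : ℚ} {C n : ℕ}, y.den ∣ C * x.den ^ n → p ∣ y.den → p ∣ C ∨ p ∣ x.den := by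
    intro y C n hy hpy
    rcases hp.dvd_mul.1 (hpy.trans hy) with h | h
    · exact Or.inl h
    · exact Or.inr (hp.dvd_of_dvd_pow h)
  rcases hp.dvd_mul.1 hd with hd | hd
  · rcases den_case (h₁ x) hd with h | h
    · exact Or.inl (h.mul_right _)
    · exact Or.inr (h.mul_right _)
  · set a := g.eval (φ.eval x) with ha
    set b := q.eval x with hb
    set y := h.eval x with hy
    have e1 : y ^ k = a * b := by
      have := congrArg (Polynomial.eval x) hq
      simpa [eval_comp] using this
    have e2 : y.num ^ k * (a.den * b.den) = a.num * b.num * (y.den : ℤ) ^ k := by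
      have : (y.num : ℚ) ^ k * (a.den * b.den) = a.num * b.num * (y.den : ℚ) ^ k := by
        rw [← Rat.mul_den_eq_num y, ← Rat.mul_den_eq_num a, ← Rat.mul_den_eq_num b, mul_pow, e1]
        ring
      exact_mod_cast this
    have e3 : p ∣ y.num.natAbs ^ k * (a.den * b.den) := by
      have h3 := congrArg Int.natAbs e2
      simp only [Int.natAbs_mul, Int.natAbs_pow, Int.natAbs_natCast] at h3
      rw [h3, mul_assoc]
      exact hd.mul_right _
    rcases hp.dvd_mul.1 e3 with h | h
    · exact Or.inr ((hp.dvd_of_dvd_pow h).mul_left _)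
    · rcases hp.dvd_mul.1 h with h | h
      · exact absurd (Nat.dvd_gcd hd h) (by rw [a.reduced]; exact hp.not_dvd_one)
      · rcases den_case (h₂ x) h with h | h
        · exact Or.inl (h.mul_left _)
        · exact Or.inr (h.mul_right _)

/-- Transport of the estimate along the map `φ`: if `h` is the squarefree part of `g ∘ φ`, the
numerical hypothesis says that all finite ramification of `φ` lies over the roots of `g`. -/
lemma RadBound.of_comp {g φ h : ℚ[X]} {k : ℕ} (hφ : 0 < φ.natDegree) (hg : 2 ≤ g.natDegree)
    (hdvd : g.comp φ ∣ h ^ k) (hdeg : h.natDegree + φ.natDegree = φ.natDegree * g.natDegree + 1)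
    (H : RadBound g) : RadBound h := by
  intro ε hε
  set n := φ.natDegree with hn
  have hn0 : (0 : ℝ) < n := by exact_mod_cast hφ
  have hg2 : (2 : ℝ) ≤ g.natDegree := by exact_mod_cast hg
  obtain ⟨δ, hδ0, hδ1, hδ2⟩ : ∃ δ : ℝ, 0 < δ ∧ δ ≤ 1 ∧ n * δ ≤ ε :=
    ⟨min 1 (ε / n), by positivity, min_le_left _ _, by
      rw [← le_div_iff₀' hn0]; exact min_le_right _ _⟩
  obtain ⟨c, hc, h₁⟩ := H δ hδ0
  obtain ⟨K, hK, h₂⟩ := exists_ht_pow_le φ hφ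
  obtain ⟨C, hC, h₃⟩ := exists_supportRad_comp_le hdvd
  have hC' : (0 : ℝ) < C := by exact_mod_cast hC
  set e : ℝ := (g.natDegree : ℝ) - 1 - δ with he
  have he0 : 0 ≤ e := by linarith
  refine ⟨c * (K ^ e)⁻¹ / C, by positivity, fun x hx => ?_⟩
  have hH1 := one_le_ht_real x
  have hgx : g.eval (φ.eval x) ≠ 0 := by
    intro h0
    obtain ⟨q, hq⟩ := hdvd
    have := congrArg (Polynomial.eval x) hq
    rw [eval_mul, eval_comp, h0, zero_mul, eval_pow] at this
    exact hx (eq_zero_of_pow_eq_zero this)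
  have h4 := h₁ _ hgx
  have h5 : (supportRad g (φ.eval x) : ℝ) ≤ C * supportRad h x := by exact_mod_cast h₃ x hx
  have h6 : (ht x : ℝ) ^ ((h.natDegree : ℝ) - 1 - ε) ≤ ((ht x : ℝ) ^ n) ^ e := by
    rw [← Real.rpow_natCast, ← Real.rpow_mul (by positivity)]
    refine Real.rpow_le_rpow_of_exponent_le hH1 ?_
    have : (h.natDegree : ℝ) + n = n * g.natDegree + 1 := by exact_mod_cast hdeg
    rw [he]
    nlinarith
  have h7 : ((ht x : ℝ) ^ n) ^ e ≤ K ^ e * (ht (φ.eval x) : ℝ) ^ e := by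
    rw [← Real.mul_rpow hK.le (by positivity)]
    exact Real.rpow_le_rpow (by positivity) (h₂ x) he0
  have hKe : 0 < K ^ e := by positivity
  calc _ ≤ c * (K ^ e)⁻¹ / C * (K ^ e * (ht (φ.eval x) : ℝ) ^ e) := by
        gcongr
        exact h6.trans h7
    _ = c * (ht (φ.eval x) : ℝ) ^ e / C := by field_simp
    _ ≤ _ := by rw [div_le_iff₀ hC']; linarith

/-- The case of the three points `0`, `1`, `∞` is the abc-conjecture itself. -/
lemma radBound_abc (habc : ABCConjecture) : RadBound (X * (X - 1)) := by
  intro ε hε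
  have hdeg : ((X * (X - 1) : ℚ[X]).natDegree : ℝ) = 2 := by
    have : (X * (X - 1) : ℚ[X]).natDegree = 2 := by
      rw [show (X * (X - 1) : ℚ[X]) = X * (X - C 1) by simp]
      rw [natDegree_mul X_ne_zero (X_sub_C_ne_zero 1), natDegree_X, natDegree_X_sub_C]
    rw [this]; norm_num
  obtain ⟨K, hK, h⟩ := habc ε hε
  set t : ℝ := (1 + ε)⁻¹ with ht_def
  have ht0 : 0 < t := by positivity
  refine ⟨(K ^ t)⁻¹, by positivity, fun x hx => ?_⟩
  have hH1 := one_le_ht_real x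
  set N := supportRad (X * (X - 1)) x with hN
  have main : (ht x : ℝ) ≤ K * (N : ℝ) ^ (1 + ε) := by
    have hx0 : x ≠ 0 := by rintro rfl; simp at hx
    have hx1 : x ≠ 1 := by rintro rfl; simp at hx
    set u := x.num with hu
    set v := x.den with hv
    have hv0 : 0 < v := x.pos
    have hu0 : u ≠ 0 := by simpa [hu] using hx0
    have huv : u - v ≠ 0 := by
      intro h0
      apply hx1
      have h1 : (x.num : ℤ) = x.den := by omega
      rw [← Rat.num_div_den x, h1]
      have : (x.den : ℚ) ≠ 0 := by exact_mod_cast x.den_nz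
      simp
    have hcop : IsCoprime u (v : ℤ) := isCoprime_num_den x
    have hNeq : N = radNat (u.natAbs * v * (u - v).natAbs) := by
      have e1 : (Polynomial.eval x (X * (X - 1))).num * (v : ℤ) ^ 2 =
          u * (u - v) * (Polynomial.eval x (X * (X - 1))).den := by
        have : ((Polynomial.eval x (X * (X - 1))).num : ℚ) * (v : ℚ) ^ 2 =
          u * (u - v) * (Polynomial.eval x (X * (X - 1))).den := by
          rw [← Rat.mul_den_eq_num (Polynomial.eval x (X * (X - 1))), hu, ← Rat.mul_den_eq_num x]
          simp only [eval_mul, eval_X, eval_sub, eval_one, ← hv]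
          ring
        exact_mod_cast this
      have e2 := congrArg Int.natAbs e1
      simp only [Int.natAbs_mul, Int.natAbs_pow, Int.natAbs_natCast] at e2
      have c1 : Nat.Coprime (v ^ 2) (u.natAbs * (u - v).natAbs) := by
        refine Nat.Coprime.pow_left _ (Nat.Coprime.mul_right ?_ ?_)
        · exact x.reduced.symm
        · have : IsCoprime (v : ℤ) (u - v) := by
            have := (hcop.symm.add_mul_left_right (-1))
            simpa [sub_eq_add_neg] using this
          simpa using Int.isCoprime_iff_nat_coprime.1 this
      have e3 : (Polynomial.eval x (X * (X - 1))).num.natAbs = u.natAbs * (u - v).natAbs := by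
        apply Nat.dvd_antisymm
        · exact (Polynomial.eval x (X * (X - 1))).reduced.dvd_of_dvd_mul_right
            (e2 ▸ dvd_mul_right _ _)
        · exact c1.symm.dvd_of_dvd_mul_right (e2 ▸ dvd_mul_right _ _)
      rw [hN, supportRad, e3]
      congr 1
      ring
    have habs : ∀ a b c : ℕ, 0 < a → 0 < b → Nat.Coprime a b → a + b = c →
        a * b * c = u.natAbs * v * (u - v).natAbs → ht x ≤ c → (ht x : ℝ) ≤ K * (N : ℝ) ^ (1 + ε) := by
      intro a b c ha hb hab habc' hprod hle
      have h1 := h a b c ha hb (by omega) hab habc'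
      rw [hprod, ← hNeq] at h1
      exact le_trans (by exact_mod_cast hle) h1
    have hcopn : Nat.Coprime u.natAbs v := x.reduced
    have hht : ht x = max u.natAbs v := rfl
    rcases lt_or_gt_of_ne hu0 with hneg | hpos
    · refine habs u.natAbs v (u - v).natAbs (by omega) hv0 hcopn (by omega) rfl ?_
      rw [hht]; exact max_le (by omega) (by omega)
    · rcases lt_or_gt_of_ne huv with h1 | h1
      · refine habs u.natAbs (u - v).natAbs v (by omega) (by omega) ?_ (by omega) (by ring) ?_
        · have : v = (u - v).natAbs + u.natAbs := by omega
          rw [this] at hcopn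
          simpa using hcopn
        · rw [hht]; exact max_le (by omega) (by omega)
      · refine habs v (u - v).natAbs u.natAbs (by omega) (by omega) ?_ (by omega) (by ring) ?_
        · have h2 : u.natAbs = (u - v).natAbs + v := by omega
          rw [h2] at hcopn
          simpa using hcopn.symm
        · rw [hht]; exact max_le (by omega) (by omega)
  have hNpos : (1 : ℝ) ≤ N := by exact_mod_cast radNat_pos _
  have h1 : (ht x : ℝ) ^ t ≤ K ^ t * N := by
    have := Real.rpow_le_rpow (by positivity) main ht0.le
    rwa [Real.mul_rpow hK.le (by positivity), ← Real.rpow_mul (by positivity), ht_def,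
      mul_inv_cancel₀ (by positivity), Real.rpow_one] at this
  rw [hdeg, inv_mul_le_iff₀ (by positivity)]
  refine le_trans ?_ h1
  refine Real.rpow_le_rpow_of_exponent_le hH1 ?_
  rw [ht_def, ← one_div, le_div_iff₀ (by positivity)]
  nlinarith

/-! ### Pullback along polynomial maps, and rational points -/

open UniqueFactorizationMonoid in
/-- If every critical point of `φ` is a root of `g ∘ φ` and `g` is squarefree, then the
derivative of `φ` accounts exactly for the repeated factors of `g ∘ φ`: the quotient `h` has the same
irreducible factors as `g ∘ φ`. -/
lemma exists_squarefree_part_comp {g φ : ℚ[X]} {j : ℕ} (hg : Squarefree g) (hφ : 0 < φ.natDegree)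
    (hcrit : derivative φ ∣ (g.comp φ) ^ j) :
    ∃ h : ℚ[X], g.comp φ = derivative φ * h ∧ ∃ k, g.comp φ ∣ h ^ k := by
  have hg0 : g ≠ 0 := hg.ne_zero
  set ψ := g.comp φ with hψ
  have hψ0 : ψ ≠ 0 := by
    intro h0
    rcases comp_eq_zero_iff.1 h0 with h | ⟨-, h⟩
    · exact hg0 h
    · rw [h, natDegree_C] at hφ; exact lt_irrefl _ hφ
  have hφ'0 : derivative φ ≠ 0 := by
    intro h0
    rw [h0] at hcrit
    exact hψ0 (eq_zero_of_pow_eq_zero (zero_dvd_iff.1 hcrit))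
  have hcop : IsCoprime ψ ((derivative g).comp φ) := by
    have h1 : IsCoprime g (derivative g) := (PerfectField.separable_iff_squarefree.2 hg)
    simpa using h1.map (compRingHom φ)
  have hder : derivative ψ = derivative φ * (derivative g).comp φ := by
    rw [hψ, derivative_comp]
  have local_shape : ∀ p : ℚ[X], Irreducible p → p ∣ ψ → ∃ (e : ℕ) (r s : ℚ[X]),
      ψ = p ^ (e + 1) * r ∧ derivative φ = p ^ e * s ∧ ¬ p ∣ s := by
    intro p hp hpψ
    have hpp : Prime p := hp.prime
    obtain ⟨n, r, hr, hψr⟩ := WfDvdMonoid.max_power_factor hψ0 hp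
    obtain ⟨e, rfl⟩ : ∃ e, n = e + 1 := by
      refine ⟨n - 1, ?_⟩
      rcases Nat.eq_zero_or_pos n with rfl | h
      · rw [hψr, pow_zero, one_mul] at hpψ
        exact absurd hpψ hr
      · omega
    set w := C ((e : ℚ) + 1) * derivative p * r + p * derivative r with hw
    have h1 : derivative ψ = p ^ e * w := by
      rw [hψr, derivative_mul, derivative_pow, hw]
      simp only [Nat.add_sub_cancel, Nat.cast_add, Nat.cast_one]
      ring
    have hpw : ¬ p ∣ w := by
      intro h
      have h2 : p ∣ C ((e : ℚ) + 1) * derivative p * r := (dvd_add_left (dvd_mul_right _ _)).1 h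
      rcases hpp.dvd_or_dvd h2 with h2 | h2
      · rcases hpp.dvd_or_dvd h2 with h2 | h2
        · have : IsUnit (C ((e : ℚ) + 1)) := isUnit_C.2 (by
            have : (e : ℚ) + 1 ≠ 0 := by positivity
            exact this.isUnit)
          exact hp.not_isUnit (isUnit_of_dvd_unit h2 this)
        · have hsep : IsCoprime p (derivative p) := hp.separable
          exact hp.not_isUnit (hsep.isUnit_of_dvd' dvd_rfl h2)
      · exact hr h2
    have h3 : p ^ e ∣ derivative φ := by
      have h4 : p ^ e ∣ derivative φ * (derivative g).comp φ := by
        rw [← hder, h1]; exact dvd_mul_right _ _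
      refine IsCoprime.dvd_of_dvd_mul_right ?_ h4
      exact (hcop.of_isCoprime_of_dvd_left hpψ).pow_left
    obtain ⟨s, hs⟩ := h3
    refine ⟨e, r, s, hψr, hs, fun hps => hpw ?_⟩
    have h5 : p ^ e * w = p ^ e * (s * (derivative g).comp φ) := by
      rw [← h1, hder, hs]; ring
    rw [mul_left_cancel₀ (pow_ne_zero _ hp.ne_zero) h5]
    exact hps.mul_right _
  have hdvd : derivative φ ∣ ψ := by
    rw [dvd_iff_emultiplicity_le hφ'0]
    intro p hp
    by_cases hpφ : p ∣ derivative φ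
    · obtain ⟨e, r, s, h1, h2, h3⟩ :=
        local_shape p hp.irreducible (hp.dvd_of_dvd_pow (hpφ.trans hcrit))
      have h4 : emultiplicity p (derivative φ) = e :=
        emultiplicity_eq_coe.2 ⟨⟨s, h2⟩, fun h => h3 (by
          rw [h2, pow_succ] at h
          exact (mul_dvd_mul_iff_left (pow_ne_zero _ hp.ne_zero)).1 h)⟩
      rw [h4]
      exact le_emultiplicity_of_pow_dvd ⟨p * r, by rw [h1]; ring⟩
    · rw [emultiplicity_eq_zero.2 hpφ]; exact zero_le
  obtain ⟨h, hh⟩ := hdvd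
  have hh0 : h ≠ 0 := by
    rintro rfl; rw [mul_zero] at hh; exact hψ0 hh
  refine ⟨h, hh, ?_⟩
  rw [exists_dvd_pow_iff_radical_dvd hψ0, radical_dvd_iff_primeFactors_subset hh0]
  intro p hp
  rw [mem_primeFactors, mem_normalizedFactors_iff' hψ0] at hp
  rw [mem_primeFactors, mem_normalizedFactors_iff' hh0]
  refine ⟨hp.1, hp.2.1, ?_⟩
  obtain ⟨e, r, s, h1, h2, h3⟩ := local_shape p hp.1 hp.2.2
  have h4 : p ^ e * (p * r) = p ^ e * (s * h) := by
    rw [← mul_assoc, ← pow_succ, ← h1, hh, h2]; ring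
  have h5 := mul_left_cancel₀ (pow_ne_zero e hp.1.ne_zero) h4
  exact (hp.1.prime.dvd_or_dvd (h5 ▸ dvd_mul_right p r)).resolve_left h3

/-- The radical estimate holds for all squarefree divisors of `f`, that is, for every Galois-stable
set of roots of `f`. -/
def RadBoundDivisors (f : ℚ[X]) : Prop := ∀ f₁ : ℚ[X], Squarefree f₁ → f₁ ∣ f → RadBound f₁

open UniqueFactorizationMonoid in
/-- Pullback along a polynomial map `φ` whose finite branch points are roots of `G`. -/
lemma RadBoundDivisors.of_comp {G φ f : ℚ[X]} {i j : ℕ} (hG : G ≠ 0) (hφ : 0 < φ.natDegree)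
    (hcrit : derivative φ ∣ (G.comp φ) ^ i) (hf : f ∣ (G.comp φ) ^ j) (H : RadBoundDivisors G) :
    RadBoundDivisors f := by
  intro f₁ hf₁ hf₁f
  set g := radical G with hg
  have hgsq : Squarefree g := squarefree_radical
  have hgb : RadBound g := H g hgsq radical_dvd_self
  obtain ⟨m, hm⟩ := exists_dvd_radical_self_pow hG
  have hGg : G.comp φ ∣ (g.comp φ) ^ m := by
    simpa using map_dvd (compRingHom φ) hm
  have hcrit' : derivative φ ∣ (g.comp φ) ^ (m * i) := by
    rw [pow_mul]; exact hcrit.trans (pow_dvd_pow_of_dvd hGg i)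
  obtain ⟨h, hh, k, hk⟩ := exists_squarefree_part_comp hgsq hφ hcrit'
  have hφ' : derivative φ ≠ 0 := by
    intro h0
    have := derivative_eq_zero.1 h0
    omega
  have hψ0 : g.comp φ ≠ 0 := by
    intro h0
    rcases comp_eq_zero_iff.1 h0 with h | ⟨-, h⟩
    · exact hgsq.ne_zero h
    · rw [h, natDegree_C] at hφ; exact lt_irrefl _ hφ
  have hh0 : h ≠ 0 := by
    rintro rfl; rw [mul_zero] at hh; exact hψ0 hh
  have hf₁h : f₁ ∣ h := by
    have h1 : f₁ ∣ h ^ (k * (m * j)) := by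
      rw [pow_mul, pow_mul]
      exact hf₁f.trans (hf.trans (pow_dvd_pow_of_dvd (hGg.trans (pow_dvd_pow_of_dvd hk m)) j))
    exact hf₁.isRadical _ _ h1
  have hdeg : h.natDegree + φ.natDegree = φ.natDegree * g.natDegree + 1 := by
    have h1 := congrArg natDegree hh
    rw [natDegree_comp, natDegree_mul hφ' hh0, natDegree_derivative, mul_comm] at h1
    omega
  rcases Nat.lt_or_ge g.natDegree 2 with hlt | hge
  · apply RadBound.of_natDegree_le_one
    have h1 := natDegree_le_of_dvd hf₁h hh0
    have h2 : φ.natDegree * g.natDegree ≤ φ.natDegree * 1 := Nat.mul_le_mul_left _ (by omega)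
    omega
  · exact (hgb.of_comp hφ hge hk hdeg).of_dvd hh0 hf₁h

/-- The second half of Belyi's argument: for finitely many rational points, the map
`(X - s₁) ^ a (X - s₃) ^ b` with its extra critical point at a third point `s₂` identifies two of the
points without creating new branch points. -/
lemma radBoundDivisors_prod (habc : ABCConjecture) (S : Finset ℚ) :
    RadBoundDivisors (∏ s ∈ S, (X - C s)) := by
  have hprod_dvd : ∀ (S : Finset ℚ) (ψ : ℚ[X]), (∀ s ∈ S, ψ.IsRoot s) →
      ∏ s ∈ S, (X - C s) ∣ ψ ^ S.card := by
    intro S ψ h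
    rw [← Finset.prod_const]
    exact Finset.prod_dvd_prod_of_dvd _ _ fun s hs => dvd_iff_isRoot.2 (h s hs)
  induction hn : S.card using Nat.strong_induction_on generalizing S with
  | _ n ih =>
  rcases Nat.lt_or_ge 2 n with h3 | h2
  · have hne : S.Nonempty := Finset.card_pos.1 (by omega)
    obtain ⟨s₂, hs₂⟩ : ((S.erase (S.min' hne)).erase (S.max' hne)).Nonempty := by
      rw [← Finset.card_pos]
      have h1 := Finset.pred_card_le_card_erase (s := S) (a := S.min' hne)
      have h2 := Finset.pred_card_le_card_erase (s := S.erase (S.min' hne)) (a := S.max' hne)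
      omega
    set s₁ := S.min' hne with hs₁
    set s₃ := S.max' hne with hs₃
    simp only [Finset.mem_erase] at hs₂
    obtain ⟨hs23, hs21, hs₂S⟩ := hs₂
    have hs₁S : s₁ ∈ S := Finset.min'_mem _ _
    have hs₃S : s₃ ∈ S := Finset.max'_mem _ _
    have h12 : s₁ < s₂ := lt_of_le_of_ne (Finset.min'_le _ _ hs₂S) (Ne.symm hs21)
    have h23 : s₂ < s₃ := lt_of_le_of_ne (Finset.le_max' _ _ hs₂S) hs23
    obtain ⟨a, b, hab⟩ : ∃ a b : ℕ,
        ((a : ℚ) + 1) * (s₃ - s₂) = ((b : ℚ) + 1) * (s₂ - s₁) := by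
      set r := (s₂ - s₁) / (s₃ - s₂) with hr
      have hr0 : 0 < r := div_pos (by linarith) (by linarith)
      have hnum : 0 < r.num := Rat.num_pos.2 hr0
      refine ⟨r.num.toNat - 1, r.den - 1, ?_⟩
      have e1 : ((r.num.toNat - 1 : ℕ) : ℚ) + 1 = r.num := by
        have : ((r.num.toNat - 1 : ℕ) : ℤ) + 1 = r.num := by omega
        exact_mod_cast this
      have e2 : ((r.den - 1 : ℕ) : ℚ) + 1 = r.den := by
        have : (r.den - 1 : ℕ) + 1 = r.den := by have := r.pos; omega
        exact_mod_cast this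
      rw [e1, e2, ← Rat.mul_den_eq_num r, hr]
      have : s₃ - s₂ ≠ 0 := by linarith
      field_simp
    set φ : ℚ[X] := (X - C s₁) ^ (a + 1) * (X - C s₃) ^ (b + 1) with hφ
    set G : ℚ[X] := ∏ t ∈ S.image (fun s => φ.eval s), (X - C t) with hG
    have hroot : ∀ s ∈ S, (G.comp φ).IsRoot s := by
      intro s hs
      rw [IsRoot, eval_comp, hG, eval_prod]
      exact Finset.prod_eq_zero (Finset.mem_image_of_mem _ hs) (by simp)
    have hdφ : derivative φ = (X - C s₁) ^ a * (X - C s₃) ^ b *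
        (C ((a : ℚ) + b + 2) * (X - C s₂)) := by
      have e1 : derivative φ = (X - C s₁) ^ a * (X - C s₃) ^ b *
          (C ((a : ℚ) + 1) * (X - C s₃) + C ((b : ℚ) + 1) * (X - C s₁)) := by
        rw [hφ, derivative_mul, derivative_pow, derivative_pow]
        simp only [derivative_sub, derivative_X, derivative_C, Nat.add_sub_cancel, Nat.cast_add,
          Nat.cast_one]
        ring
      rw [e1]
      congr 1
      have e2 := congrArg C hab
      simp only [C_mul, C_add, C_sub, C_1] at e2 ⊢
      rw [show (C 2 : ℚ[X]) = 1 + 1 by rw [← C_1, ← C_add]; norm_num]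
      linear_combination (-1 : ℚ[X]) * e2
    refine RadBoundDivisors.of_comp (G := G) (φ := φ) (i := a + b + 1) (j := S.card)
      (Finset.prod_ne_zero_iff.2 fun t _ => X_sub_C_ne_zero t) ?_ ?_ (hprod_dvd S _ hroot)
      (ih _ ?_ _ rfl)
    · rw [hφ, natDegree_mul (pow_ne_zero _ (X_sub_C_ne_zero _)) (pow_ne_zero _ (X_sub_C_ne_zero _)),
        natDegree_pow, natDegree_X_sub_C]
      omega
    · have d : ∀ s ∈ S, X - C s ∣ G.comp φ := fun s hs => dvd_iff_isRoot.2 (hroot s hs)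
      rw [hdφ, pow_succ, pow_add]
      refine mul_dvd_mul (mul_dvd_mul (pow_dvd_pow_of_dvd (d _ hs₁S) _)
        (pow_dvd_pow_of_dvd (d _ hs₃S) _)) ?_
      have hu : IsUnit (C ((a : ℚ) + b + 2)) := isUnit_C.2 (by
        have : (a : ℚ) + b + 2 ≠ 0 := by positivity
        exact this.isUnit)
      exact (hu.mul_left_dvd).2 (d _ hs₂S)
    · rw [← hn]
      refine lt_of_le_of_ne Finset.card_image_le fun h => ?_
      have hinj := Finset.card_image_iff.1 h
      have : s₁ = s₃ := hinj hs₁S hs₃S (by simp [hφ])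
      linarith
  · obtain ⟨a, b, hab, hS⟩ : ∃ a b : ℚ, a ≠ b ∧ ∀ s ∈ S, s = a ∨ s = b := by
      rcases Nat.lt_or_ge 1 n with h1 | h1
      · obtain ⟨a, b, hab, rfl⟩ := Finset.card_eq_two.1 (show S.card = 2 by omega)
        exact ⟨a, b, hab, by simp⟩
      · obtain ⟨a, ha⟩ := Finset.card_le_one_iff_subset_singleton.1 (show S.card ≤ 1 by omega)
        exact ⟨a, a + 1, by simp, fun s hs => Or.inl (Finset.mem_singleton.1 (ha hs))⟩
    have hba : b - a ≠ 0 := sub_ne_zero.2 hab.symm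
    have hφ : (C (b - a)⁻¹ * (X - C a)).natDegree = 1 := by
      rw [natDegree_C_mul (inv_ne_zero hba), natDegree_X_sub_C]
    refine RadBoundDivisors.of_comp (G := X * (X - 1)) (φ := C (b - a)⁻¹ * (X - C a)) (i := 0)
      (j := S.card) ?_ (by omega) ?_ (hprod_dvd S _ ?_) ?_
    · exact mul_ne_zero X_ne_zero (X_sub_C_ne_zero 1)
    · rw [pow_zero]
      refine IsUnit.dvd ?_
      simpa using hba
    · intro s hs
      rcases hS s hs with rfl | rfl
      · simp
      · simp [hba]
    · intro f₁ _ hf₁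
      exact (radBound_abc habc).of_dvd (mul_ne_zero X_ne_zero (X_sub_C_ne_zero 1)) hf₁

/-! ### Reduction to rational points -/

open UniqueFactorizationMonoid in
/-- A complexity measure for the reduction to rational points: each irreducible factor of degree `m`
contributes `m! - 1`. Linear factors count zero, and one factor of degree `n ≥ 2` outweighs any
polynomial of degree `n - 1`. -/
noncomputable def weight (f : ℚ[X]) : ℕ :=
  ((normalizedFactors f).map fun p => p.natDegree.factorial - 1).sum

open UniqueFactorizationMonoid in
lemma weight_mul {f g : ℚ[X]} (hf : f ≠ 0) (hg : g ≠ 0) : weight (f * g) = weight f + weight g := by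
  simp [weight, normalizedFactors_mul hf hg]

open UniqueFactorizationMonoid in
lemma weight_irreducible {p : ℚ[X]} (hp : Irreducible p) : weight p = p.natDegree.factorial - 1 := by
  have h : (normalize p).natDegree = p.natDegree :=
    natDegree_eq_of_degree_eq degree_normalize
  simp [weight, normalizedFactors_irreducible hp, h]

open UniqueFactorizationMonoid in
lemma weight_of_isUnit {u : ℚ[X]} (hu : IsUnit u) : weight u = 0 := by
  simp [weight, normalizedFactors_of_isUnit hu]

lemma weight_le {m : ℕ} (f : ℚ[X]) (hf : f ≠ 0) (hm : f.natDegree ≤ m) :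
    weight f ≤ f.natDegree * (m.factorial - 1) := by
  induction f using UniqueFactorizationMonoid.induction_on_prime with
  | h₁ => exact absurd rfl hf
  | h₂ u hu => simp [weight_of_isUnit hu]
  | h₃ a p ha hp ih =>
    rw [natDegree_mul hp.ne_zero ha] at hm ⊢
    rw [weight_mul hp.ne_zero ha, weight_irreducible hp.irreducible, add_mul]
    have h1 : p.natDegree.factorial ≤ m.factorial := Nat.factorial_le (by omega)
    have h2 : 1 ≤ p.natDegree := hp.irreducible.natDegree_pos
    refine Nat.add_le_add ?_ (ih ha (by omega))
    calc p.natDegree.factorial - 1 ≤ 1 * (m.factorial - 1) := by omega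
      _ ≤ _ := Nat.mul_le_mul_right _ h2

/-- The image under `φ` of a root of an irreducible polynomial has at most the same degree. -/
lemma exists_irreducible_dvd_comp {q : ℚ[X]} (hq : Irreducible q) (φ : ℚ[X]) :
    ∃ r : ℚ[X], Irreducible r ∧ r.natDegree ≤ q.natDegree ∧ q ∣ r.comp φ := by
  have : Fact (Irreducible q) := ⟨hq⟩
  have : FiniteDimensional ℚ (AdjoinRoot q) := (AdjoinRoot.powerBasis hq.ne_zero).finite
  set β : AdjoinRoot q := aeval (AdjoinRoot.root q) φ with hβ
  have hint : IsIntegral ℚ β := IsIntegral.of_finite ℚ β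
  refine ⟨minpoly ℚ β, minpoly.irreducible hint, ?_, ?_⟩
  · have h1 := minpoly.natDegree_le (A := ℚ) β
    rwa [(AdjoinRoot.powerBasis hq.ne_zero).finrank, AdjoinRoot.powerBasis_dim] at h1
  · rw [← AdjoinRoot.mk_eq_zero, ← AdjoinRoot.aeval_eq, aeval_comp]
    exact minpoly.aeval ℚ β

lemma exists_dvd_comp (φ f : ℚ[X]) (hf : f ≠ 0) :
    ∃ G : ℚ[X], G ≠ 0 ∧ weight G ≤ weight f ∧ f ∣ G.comp φ := by
  induction f using UniqueFactorizationMonoid.induction_on_prime with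
  | h₁ => exact absurd rfl hf
  | h₂ u hu => exact ⟨1, one_ne_zero, by simp [weight_of_isUnit isUnit_one], hu.dvd⟩
  | h₃ a p ha hp ih =>
    obtain ⟨G, hG, hw, hd⟩ := ih ha
    obtain ⟨r, hr, hrd, hrc⟩ := exists_irreducible_dvd_comp hp.irreducible φ
    refine ⟨r * G, mul_ne_zero hr.ne_zero hG, ?_, ?_⟩
    · rw [weight_mul hr.ne_zero hG, weight_mul hp.ne_zero ha, weight_irreducible hr,
        weight_irreducible hp.irreducible]
      have := Nat.factorial_le hrd
      omega
    · rw [mul_comp]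
      exact mul_dvd_mul hrc hd

/-- The first half of Belyi's argument: mapping by an irreducible factor `p` of degree at least two
sends the roots of `p` to `0`, does not increase the degree of other roots, and has critical values
of degree less than `deg p`; hence the weight drops until all roots are rational. -/
lemma radBoundDivisors_of_ne_zero (habc : ABCConjecture) (f : ℚ[X]) (hf : f ≠ 0) :
    RadBoundDivisors f := by
  induction hn : weight f using Nat.strong_induction_on generalizing f with
  | _ n ih =>
  by_cases hs : f.Splits
  · refine RadBoundDivisors.of_comp (G := ∏ s ∈ f.roots.toFinset, (X - C s)) (φ := X) (i := 0)
      (j := Multiset.card f.roots)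
      (Finset.prod_ne_zero_iff.2 fun t _ => X_sub_C_ne_zero t) (by simp) (by simp) ?_
      (radBoundDivisors_prod habc _)
    rw [comp_X]
    conv_lhs => rw [hs.eq_prod_roots]
    have hu : IsUnit (C f.leadingCoeff) := isUnit_C.2 (leadingCoeff_ne_zero.2 hf).isUnit
    rw [hu.mul_left_dvd]
    have h1 : (f.roots.map fun _ => ∏ s ∈ f.roots.toFinset, (X - C s)).prod =
        (∏ s ∈ f.roots.toFinset, (X - C s)) ^ Multiset.card f.roots := by
      rw [Multiset.map_const', Multiset.prod_replicate]
    rw [← h1]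
    refine Multiset.prod_dvd_prod_of_dvd _ _ fun s hs => ?_
    exact Finset.dvd_prod_of_mem (fun s => X - C s) (Multiset.mem_toFinset.2 hs)
  · rw [splits_iff_splits] at hs
    push Not at hs
    obtain ⟨-, p, hp, hpf, hp1⟩ := hs
    obtain ⟨f', rfl⟩ := hpf
    have hf' : f' ≠ 0 := right_ne_zero_of_mul hf
    have hpd : 2 ≤ p.natDegree := by
      have h1 := hp.natDegree_pos
      have h2 : p.natDegree ≠ 1 := fun h => hp1 ((degree_eq_iff_natDegree_eq_of_pos one_pos).2 h)
      omega
    have hp' : derivative p ≠ 0 := by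
      intro h0
      have := derivative_eq_zero.1 h0
      omega
    obtain ⟨G₁, hG₁, hw₁, hd₁⟩ := exists_dvd_comp p f' hf'
    obtain ⟨G₂, hG₂, hw₂, hd₂⟩ := exists_dvd_comp p (derivative p) hp'
    have hG12 : G₁ * G₂ ≠ 0 := mul_ne_zero hG₁ hG₂
    have hcomp : (X * (G₁ * G₂)).comp p = p * (G₁.comp p * G₂.comp p) := by simp
    refine RadBoundDivisors.of_comp (G := X * (G₁ * G₂)) (φ := p) (i := 1) (j := 1)
      (mul_ne_zero X_ne_zero hG12) (by omega) ?_ ?_ (ih _ ?_ _ (mul_ne_zero X_ne_zero hG12) rfl)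
    · rw [pow_one, hcomp]
      exact (hd₂.mul_left _).mul_left _
    · rw [pow_one, hcomp]
      exact mul_dvd_mul_left _ (hd₁.mul_right _)
    · rw [← hn, weight_mul X_ne_zero hG12, weight_mul hG₁ hG₂, weight_mul hp.ne_zero hf',
        weight_irreducible irreducible_X, weight_irreducible hp]
      have h3 := weight_le (m := p.natDegree - 1) (derivative p) hp' (natDegree_derivative_le p)
      rw [natDegree_derivative] at h3
      obtain ⟨k, hk⟩ : ∃ k, p.natDegree = k + 2 := ⟨p.natDegree - 2, by omega⟩
      rw [hk, show k + 2 - 1 = k + 1 by omega] at h3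
      rw [hk, Nat.factorial_succ (k + 1), natDegree_X]
      have h4 := Nat.factorial_pos (k + 1)
      obtain ⟨t, ht⟩ : ∃ t, (k + 1).factorial = t + 1 := ⟨(k + 1).factorial - 1, by omega⟩
      rw [ht] at h3 ⊢
      have h5 : (k + 1 + 1) * (t + 1) = (k + 1) * t + (k + 1) + (t + 1) := by ring
      simp only [Nat.factorial_one, Nat.add_sub_cancel] at h3 ⊢
      omega

/-! ### Binary forms -/

/-- Squarefreeness passes from the binary form to its dehomogenization, over `ℚ` by Gauss's lemma. -/
lemma squarefree_dehomogenize {F : MvPolynomial (Fin 2) ℤ} {d : ℕ} (hF : F ≠ 0)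
    (hhom : F.IsHomogeneous d) (hsq : Squarefree F) {f : ℤ[X]}
    (hf : MvPolynomial.aeval ![X, 1] F = f) (hdeg : f.natDegree ≤ d) :
    Squarefree (f.map (Int.castRingHom ℚ)) := by
  have hFf : f.homogenize d = F := homogenize_eq_of_isHomogeneous hhom hf
  have hf0 : f ≠ 0 := by rintro rfl; simp at hFf; exact hF hFf.symm
  have hfQ0 : f.map (Int.castRingHom ℚ) ≠ 0 :=
    (Polynomial.map_ne_zero_iff (RingHom.injective_int _)).2 hf0
  rw [squarefree_iff_no_irreducibles hfQ0]
  intro q hq hqq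
  obtain ⟨Q, hQprim, c, hc, hQ⟩ : ∃ Q : ℤ[X], Q.IsPrimitive ∧ ∃ c : ℚ, c ≠ 0 ∧
      Q.map (Int.castRingHom ℚ) = C c * q := by
    obtain ⟨b, hb, hb'⟩ := IsLocalization.integerNormalization_spec (nonZeroDivisors ℤ) q
    set P := IsLocalization.integerNormalization (nonZeroDivisors ℤ) q with hP
    have hb0 : (b : ℚ) ≠ 0 := by exact_mod_cast nonZeroDivisors.ne_zero hb
    have hPq : P.map (Int.castRingHom ℚ) = C (b : ℚ) * q := by
      have : (algebraMap ℤ ℚ) = Int.castRingHom ℚ := rfl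
      rw [← this, hb']
      ext i
      simp
    have hP0 : P ≠ 0 := by
      intro h0
      rw [h0, Polynomial.map_zero] at hPq
      exact mul_ne_zero (C_ne_zero.2 hb0) hq.ne_zero hPq.symm
    have hcont : (P.content : ℚ) ≠ 0 := by
      exact_mod_cast content_eq_zero_iff.not.2 hP0
    refine ⟨P.primPart, P.isPrimitive_primPart, (P.content : ℚ)⁻¹ * b,
      mul_ne_zero (inv_ne_zero hcont) hb0, ?_⟩
    have h1 : C (P.content : ℚ) * P.primPart.map (Int.castRingHom ℚ) = C (b : ℚ) * q := by
      rw [← hPq]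
      conv_rhs => rw [P.eq_C_content_mul_primPart]
      simp
    have h2 : C (P.content : ℚ)⁻¹ * C (P.content : ℚ) = 1 := by
      rw [← C_mul, inv_mul_cancel₀ hcont, C_1]
    rw [C_mul, mul_assoc, ← h1, ← mul_assoc, h2, one_mul]
  have hQdeg : 0 < Q.natDegree := by
    rw [← natDegree_map_eq_of_injective (RingHom.injective_int (Int.castRingHom ℚ)), hQ,
      natDegree_C_mul hc]
    exact hq.natDegree_pos
  have hdvd : Q * Q ∣ f := by
    rw [IsPrimitive.Int.dvd_iff_map_cast_dvd_map_cast _ _ (hQprim.mul hQprim), Polynomial.map_mul, hQ]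
    have hu : IsUnit (C c * C c) := (isUnit_C.2 hc.isUnit).mul (isUnit_C.2 hc.isUnit)
    rw [show C c * q * (C c * q) = (C c * C c) * (q * q) by ring, hu.mul_left_dvd]
    exact hqq
  obtain ⟨R, hR⟩ := hdvd
  have hQ0 : Q ≠ 0 := by rintro rfl; simp at hQdeg
  have hR0 : R ≠ 0 := by rintro rfl; rw [mul_zero] at hR; exact hf0 hR
  have hdegs : f.natDegree = Q.natDegree + Q.natDegree + R.natDegree := by
    rw [hR, natDegree_mul (mul_ne_zero hQ0 hQ0) hR0, natDegree_mul hQ0 hQ0]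
  have hFQ : F = Q.homogenize Q.natDegree * Q.homogenize Q.natDegree *
      R.homogenize (d - (Q.natDegree + Q.natDegree)) := by
    rw [← homogenize_mul _ _ le_rfl le_rfl, ← homogenize_mul _ _ natDegree_mul_le (by omega), ← hR,
      ← hFf]
    congr 1
    omega
  have hunit : IsUnit (Q.homogenize Q.natDegree) := hsq _ (hFQ ▸ dvd_mul_right _ _)
  have hQunit : IsUnit Q := by
    have := hunit.map (MvPolynomial.aeval (![X, 1] : Fin 2 → ℤ[X]))
    rwa [aeval_homogenize_X_one Q le_rfl] at this
  have := natDegree_eq_zero_of_isUnit hQunit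
  omega

lemma natDegree_dehomogenize_le {F : MvPolynomial (Fin 2) ℤ} {d : ℕ} (hhom : F.IsHomogeneous d) :
    (MvPolynomial.aeval (![X, 1] : Fin 2 → ℤ[X]) F).natDegree ≤ d := by
  rw [F.as_sum]
  simp only [MvPolynomial.aeval_sum, MvPolynomial.aeval_monomial, ← C_eq_algebraMap]
  refine natDegree_sum_le_of_forall_le _ _ fun m hm ↦ ?_
  have hw : m.weight 1 = d := hhom <| by simpa using hm
  have hm0 : m 0 + m 1 = d := by
    simpa [Finsupp.weight_apply, Finsupp.sum_fintype, Fin.sum_univ_two] using hw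
  refine (natDegree_C_mul_le _ _).trans ?_
  simp [Finsupp.prod_fintype, Fin.prod_univ_two]
  omega

/-- The dehomogenization loses at most one degree, since `V ^ 2` does not divide `F`. -/
lemma le_natDegree_dehomogenize_add_one {F : MvPolynomial (Fin 2) ℤ} {d : ℕ}
    (hsq : Squarefree F) {f : ℤ[X]} (hFf : f.homogenize d = F) : d ≤ f.natDegree + 1 := by
  by_contra hlt
  have hmul : F = f.homogenize (d - 2) * MvPolynomial.X 1 ^ 2 := by
    rw [← homogenize_one, ← homogenize_mul _ _ (by omega) (by simp), mul_one, ← hFf]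
    congr 1
    omega
  have hunit : IsUnit (MvPolynomial.X 1 : MvPolynomial (Fin 2) ℤ) := by
    refine hsq _ ?_
    rw [hmul, ← pow_two]
    exact dvd_mul_left _ _
  have h0 := hunit.map (MvPolynomial.eval (0 : Fin 2 → ℤ))
  simp at h0

lemma natAbs_num_den_of_isCoprime {u v : ℤ} (huv : IsCoprime u v) (hv : v ≠ 0) :
    ((u : ℚ) / v).num.natAbs = u.natAbs ∧ ((u : ℚ) / v).den = v.natAbs := by
  have hcop : u.natAbs.Coprime v.natAbs := Int.isCoprime_iff_nat_coprime.1 huv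
  set x : ℚ := (u : ℚ) / v with hx
  have hvQ : (v : ℚ) ≠ 0 := by exact_mod_cast hv
  have hmul : u * (x.den : ℤ) = x.num * v := by
    have h1 : x * v = u := by rw [hx]; field_simp
    have h2 : x * x.den = x.num := Rat.mul_den_eq_num x
    have h3 : (u : ℚ) * x.den = x.num * v := by rw [← h1, ← h2]; ring
    exact_mod_cast h3
  have hnat : u.natAbs * x.den = x.num.natAbs * v.natAbs := by
    simpa [Int.natAbs_mul] using congrArg Int.natAbs hmul
  refine ⟨Nat.dvd_antisymm ?_ ?_, Nat.dvd_antisymm ?_ ?_⟩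
  · exact x.reduced.dvd_of_dvd_mul_right (hnat ▸ dvd_mul_right _ _)
  · exact hcop.dvd_of_dvd_mul_right (hnat ▸ dvd_mul_right _ _)
  · exact x.reduced.symm.dvd_of_dvd_mul_left (hnat ▸ dvd_mul_left _ _)
  · exact hcop.symm.dvd_of_dvd_mul_left (hnat ▸ dvd_mul_left _ _)

theorem stmt15 (habc : ABCConjecture) (F : MvPolynomial (Fin 2) ℤ) (d : ℕ)
    (hF : F ≠ 0) (hhom : F.IsHomogeneous d) (hsq : Squarefree F) :
    ∀ ε : ℝ, 0 < ε → ∃ c : ℝ, 0 < c ∧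
      ∀ u v : ℤ, IsCoprime u v → MvPolynomial.eval ![u, v] F ≠ 0 →
        c * ((max |u| |v| : ℤ) : ℝ) ^ ((d : ℝ) - 2 - ε) ≤
          (radNat (MvPolynomial.eval ![u, v] F).natAbs : ℝ) := by
  intro ε hε
  obtain ⟨f, hf⟩ : ∃ f : ℤ[X], MvPolynomial.aeval ![X, 1] F = f := ⟨_, rfl⟩
  have hdeg : f.natDegree ≤ d := hf ▸ natDegree_dehomogenize_le hhom
  have hFf : f.homogenize d = F := homogenize_eq_of_isHomogeneous hhom hf
  have hdeg' : d ≤ f.natDegree + 1 := le_natDegree_dehomogenize_add_one hsq hFf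
  have hsqQ := squarefree_dehomogenize hF hhom hsq hf hdeg
  set g : ℚ[X] := f.map (Int.castRingHom ℚ) with hg
  have hgdeg : g.natDegree = f.natDegree :=
    natDegree_map_eq_of_injective (RingHom.injective_int _) _
  obtain ⟨c, hc, hbound⟩ :=
    radBoundDivisors_of_ne_zero habc g hsqQ.ne_zero g hsqQ dvd_rfl ε hε
  refine ⟨min c 1, lt_min hc one_pos, fun u v huv hFuv ↦ ?_⟩
  have hrad1 : (1 : ℝ) ≤ radNat (MvPolynomial.eval ![u, v] F).natAbs := by
    exact_mod_cast radNat_pos _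
  by_cases hv : v = 0
  · subst hv
    have hu : |u| = 1 := Int.isUnit_iff_abs_eq.1 (isCoprime_zero_right.1 huv)
    have hmax : (max |u| |(0 : ℤ)| : ℤ) = 1 := by rw [hu]; simp
    rw [hmax, Int.cast_one, Real.one_rpow, mul_one]
    exact (min_le_right _ _).trans hrad1
  set N := MvPolynomial.eval ![u, v] F with hN
  obtain ⟨hnum, hden⟩ := natAbs_num_den_of_isCoprime huv hv
  have hvQ : (v : ℚ) ≠ 0 := by exact_mod_cast hv
  have heval : (N : ℚ) = g.eval ((u : ℚ) / v) * (v : ℚ) ^ d := by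
    have h1 := eval_homogenize (p := g) (n := d) (hgdeg ▸ hdeg) (![(u : ℚ), (v : ℚ)])
      (by simpa using hvQ)
    rw [hg, homogenize_map, hFf, MvPolynomial.eval_map] at h1
    have h2 : (N : ℚ) = MvPolynomial.eval₂ (Int.castRingHom ℚ) ![(u : ℚ), (v : ℚ)] F := by
      have := MvPolynomial.eval₂_comp_left (Int.castRingHom ℚ) (RingHom.id ℤ) ![u, v] F
      rw [← MvPolynomial.eval₂_id, RingHom.comp_id] at *
      have h3 : (Int.castRingHom ℚ) ∘ ![u, v] = ![(u : ℚ), (v : ℚ)] := by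
        ext i; fin_cases i <;> simp
      rw [h3] at this
      simpa [hN] using this
    rw [h2, h1]
    simp [hg]
  set x : ℚ := (u : ℚ) / v with hx
  have hgx : g.eval x ≠ 0 := by
    intro h0
    rw [h0, zero_mul] at heval
    exact hFuv (by exact_mod_cast heval)
  have hmul : (g.eval x).num * v ^ d = N * (g.eval x).den := by
    have h1 := Rat.mul_den_eq_num (g.eval x)
    have h2 : ((g.eval x).num : ℚ) * v ^ d = N * (g.eval x).den := by rw [heval, ← h1]; ring
    exact_mod_cast h2
  have hdvd : (g.eval x).num.natAbs ∣ N.natAbs := by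
    have h1 : (g.eval x).num.natAbs ∣ N.natAbs * (g.eval x).den := by
      have := congrArg Int.natAbs hmul
      rw [Int.natAbs_mul, Int.natAbs_mul, Int.natAbs_natCast] at this
      exact this ▸ dvd_mul_right _ _
    exact (g.eval x).reduced.dvd_of_dvd_mul_right h1
  have hN0 : N.natAbs ≠ 0 := Int.natAbs_ne_zero.2 hFuv
  have hht : ((max |u| |v| : ℤ) : ℝ) = ht x := by
    have : (max |u| |v| : ℤ) = ((ht x : ℕ) : ℤ) := by
      rw [ht, hnum, hden]; push_cast; simp
    rw [this]; simp
  have hH1 : (1 : ℝ) ≤ ht x := one_le_ht_real x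
  have hH0 : (0 : ℝ) < ht x := one_pos.trans_le hH1
  have hb := hbound x hgx
  rw [hgdeg] at hb
  rw [hht]
  refine (mul_le_mul_of_nonneg_right (min_le_left c 1) (Real.rpow_nonneg hH0.le _)).trans ?_
  rcases hdeg.eq_or_lt with heq | hlt
  · have hle : supportRad g x ≤ v.natAbs * radNat N.natAbs := by
      refine radNat_le_mul (Int.natAbs_ne_zero.2 hv) hN0 fun p hp hpd ↦ ?_
      rcases hp.dvd_mul.1 hpd with h | h
      · exact Or.inl (hden ▸ h)
      · exact Or.inr (h.trans hdvd)
    have hle' : (supportRad g x : ℝ) ≤ ht x * radNat N.natAbs := by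
      have h1 : v.natAbs ≤ ht x := by rw [ht, hden]; exact le_max_right _ _
      exact_mod_cast hle.trans (Nat.mul_le_mul_right _ h1)
    have hpow : (ht x : ℝ) ^ ((f.natDegree : ℝ) - 1 - ε)
        = (ht x : ℝ) ^ ((d : ℝ) - 2 - ε) * ht x := by
      rw [heq, ← Real.rpow_add_one hH0.ne']
      congr 1
      ring
    rw [hpow] at hb
    refine le_of_mul_le_mul_right ?_ hH0
    linarith
  · have hd : d = f.natDegree + 1 := by omega
    -- here `V` divides `F`, so the primes in the denominator of `u / v` already divide `F(u, v)`
    have hvN : v ∣ N := by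
      have h1 : F = f.homogenize f.natDegree * MvPolynomial.X 1 := by
        rw [← pow_one (MvPolynomial.X 1), ← homogenize_one,
          ← homogenize_mul _ _ le_rfl (by simp), mul_one, ← hFf, hd]
      have h2 : N = MvPolynomial.eval ![u, v] (f.homogenize f.natDegree) * v := by
        rw [hN]
        conv_lhs => rw [h1]
        simp
      exact h2 ▸ dvd_mul_left _ _
    have hle : supportRad g x ≤ 1 * radNat N.natAbs := by
      refine radNat_le_mul one_ne_zero hN0 fun p hp hpd ↦ Or.inr ?_
      rcases hp.dvd_mul.1 hpd with h | h
      · exact (hden ▸ h : p ∣ v.natAbs).trans (Int.natAbs_dvd_natAbs.2 hvN)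
      · exact h.trans hdvd
    rw [one_mul] at hle
    have hexp : (d : ℝ) - 2 - ε = (f.natDegree : ℝ) - 1 - ε := by
      rw [hd]; push_cast; ring
    rw [hexp]
    exact hb.trans (by exact_mod_cast hle)
end

section
/- Let P ∈ ℤ[T] be a separable polynomial of odd degree and let d be a nonzero squarefree integer. Then for every prime number p there exist t, y ∈ ℚ_p with y ≠ 0 and y² = d·P(t); that is, the twisted hyperelliptic curve y² = d·P(t) has a non-trivial ℚ_p-rational point for every prime p. -/
open Polynomial

/-!
Let `a` be the leading coefficient of `P` and `n = 2k + 1` its degree. With `Q` the reversed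
polynomial, `P(t) = t ^ n * Q(1 / t)` and `Q(0) = a`. For `t = d * a * p ^ (-2N)` this gives
`d * P(t) = (d * a * p ^ (-N) * t ^ k) ^ 2 * (Q(1 / t) / a)`. As `N → ∞`, `1 / t → 0` in `ℚ_p`, so
the last factor tends to `1`, and by Hensel's lemma elements of `ℚ_p` close to `1` are nonzero
squares (`exists_sq_eq_of_near_one`).
-/

/-- Hensel's lemma for `X ^ 2 - u` at the approximate root `1`. -/
lemma exists_sq_eq_of_near_one (p : ℕ) [Fact p.Prime] (u : ℚ_[p])
    (hu : ‖u - 1‖ < ‖(2 : ℚ_[p])‖ ^ 2) : ∃ w : ℚ_[p], w ^ 2 = u := by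
  have h2 : ‖(2 : ℚ_[p])‖ ≤ 1 := by
    simpa using Padic.norm_int_le_one (p := p) 2
  have h1 : ‖u - 1‖ ≤ 1 := hu.le.trans (pow_le_one₀ (norm_nonneg _) h2)
  -- `u = 1 + v` with `v` a `p`-adic integer.
  let v : ℤ_[p] := ⟨u - 1, h1⟩
  have hH : ‖(X ^ 2 - C (1 + v) : ℤ_[p][X]).aeval (1 : ℤ_[p])‖ <
      ‖(derivative (X ^ 2 - C (1 + v) : ℤ_[p][X])).aeval (1 : ℤ_[p])‖ ^ 2 := by
    have e1 : (X ^ 2 - C (1 + v) : ℤ_[p][X]).aeval (1 : ℤ_[p]) = -v := by simp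
    have e2 : (derivative (X ^ 2 - C (1 + v) : ℤ_[p][X])).aeval (1 : ℤ_[p]) = 2 := by
      simp [one_add_one_eq_two]
    rw [e1, e2, norm_neg, PadicInt.norm_def, PadicInt.norm_def]
    exact hu
  obtain ⟨z, hz, -⟩ := hensels_lemma hH
  refine ⟨z, ?_⟩
  have hz' : z ^ 2 = 1 + v := by simpa [sub_eq_zero] using hz
  have hv : (v : ℚ_[p]) = u - 1 := rfl
  rw [← PadicInt.coe_pow, hz', PadicInt.coe_add, PadicInt.coe_one, hv, add_sub_cancel]

theorem stmt16 (P : Polynomial ℤ) (hP0 : P ≠ 0)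
    (hsep : (P.map (Int.castRingHom ℚ)).Separable) (hodd : Odd P.natDegree)
    (d : ℤ) (hd0 : d ≠ 0) (hdsq : ∀ p : ℕ, p.Prime → ¬ ((p : ℤ) ^ 2 ∣ d)) :
    ∀ (p : ℕ) [Fact p.Prime],
      ∃ t y : ℚ_[p], y ≠ 0 ∧ y ^ 2 = (d : ℚ_[p]) * Polynomial.aeval t P := by
  intro p _
  obtain ⟨k, hk⟩ := hodd
  have hp : (p : ℚ_[p]) ≠ 0 := by exact_mod_cast (Fact.out : p.Prime).ne_zero
  have hd : (d : ℚ_[p]) ≠ 0 := by exact_mod_cast hd0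
  obtain ⟨a, ha_def⟩ : ∃ a : ℚ_[p], a = (P.leadingCoeff : ℚ_[p]) := ⟨_, rfl⟩
  have ha : a ≠ 0 := by
    rw [ha_def]; exact_mod_cast leadingCoeff_ne_zero.mpr hP0
  have hs : Filter.Tendsto (fun N : ℕ => ((p : ℚ_[p]) ^ N) ^ 2 / (d * a))
      Filter.atTop (nhds 0) := by
    have h := tendsto_pow_atTop_nhds_zero_of_norm_lt_one (Padic.norm_p_lt_one (p := p))
    simpa using (h.pow 2).div_const (d * a)
  have hu : Filter.Tendsto
      (fun N : ℕ => aeval (((p : ℚ_[p]) ^ N) ^ 2 / (d * a)) P.reverse / a)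
      Filter.atTop (nhds 1) := by
    have h0 : aeval (0 : ℚ_[p]) P.reverse = a := by
      rw [← coeff_zero_eq_aeval_zero', coeff_zero_reverse, ha_def]; simp
    have h := ((P.reverse.continuous_aeval (A := ℚ_[p])).tendsto 0).comp hs
    rw [h0] at h
    simpa [ha] using h.div_const a
  have h2 : 0 < ‖(2 : ℚ_[p])‖ ^ 2 := pow_pos (norm_pos_iff.mpr two_ne_zero) 2
  obtain ⟨N, hN1, hN0⟩ := ((hu.eventually (Metric.ball_mem_nhds 1 h2)).and
    (hu.eventually_ne one_ne_zero)).exists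
  obtain ⟨w, hw⟩ := exists_sq_eq_of_near_one p _ (by simpa [dist_eq_norm] using hN1)
  have hw0 : w ≠ 0 := by
    rintro rfl
    exact hN0 (by rw [← hw]; simp)
  obtain ⟨q, hq_def⟩ : ∃ q : ℚ_[p], q = (p : ℚ_[p]) ^ N := ⟨_, rfl⟩
  have hq : q ≠ 0 := by rw [hq_def]; exact pow_ne_zero _ hp
  rw [← hq_def] at hw
  obtain ⟨t, ht_def⟩ : ∃ t : ℚ_[p], t = d * a / q ^ 2 := ⟨_, rfl⟩
  have ht : t ≠ 0 := by rw [ht_def]; positivity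
  have hinv : q ^ 2 / (d * a) = t⁻¹ := by rw [ht_def, inv_div]
  have hrev : aeval t⁻¹ P.reverse * t ^ P.natDegree = aeval t P := by
    let _ := invertibleOfNonzero ht
    simpa [aeval_def] using eval₂_reverse_mul_pow (algebraMap ℤ ℚ_[p]) t P
  refine ⟨t, d * a / q * t ^ k * w, by positivity, ?_⟩
  rw [hinv, eq_div_iff ha] at hw
  rw [← hrev, ← hw, hk, mul_pow, mul_pow]
  have : (d * a / q) ^ 2 = d * a * t := by rw [ht_def]; field_simp
  rw [this]; ring
end
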